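/- arXiv:1004.2848 — 2 statements merged into one kernel-verified Lean document; each statement's English description precedes it below -/
import Mathlib

section
/- Fix α > 0. For every Borel probability measure μ on Σ that is σ-invariant (μ(σ⁻¹ B) = μ(B) for all Borel sets B), one has ∫ A_α dμ ≤ 0; moreover ∫ A_α dμ = 0 if and only if μ = t·δ_{0^∞} + (1−t)·δ_{1^∞} for some t ∈ [0,1]. In particular, the A_α-maximizing measures are exactly the convex combinations of the Dirac measures at the two fixed points 0^∞ and 1^∞. -/
/-!
The potential `A_α` is bounded, measurable and nonpositive, and it vanishes only at the two fixed
points `0^∞` and `1^∞` (`pot_eq_zero_iff`). Hence its integral against any probability measure is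
nonpositive, and it is zero exactly when the measure is carried by these two points
(`integral_pot_eq_zero_iff`), that is, when the measure is the sum of its two point masses
(`eq_smul_dirac_add`).
-/

open MeasureTheory Filter Topology

noncomputable section

/-- The full shift space `Σ = {0,1,2}^ℕ`. -/
abbrev Sig : Type := ℕ → Fin 3

/-- The shift map `σ`. -/
def shift (x : Sig) : Sig := fun n => x (n + 1)

/-- The fixed point `0^∞`. -/
def zeroSeq : Sig := fun _ => 0

/-- The fixed point `1^∞`. -/
def oneSeq : Sig := fun _ => 1

/-- Prepending a symbol: `a·x = (a, x₀, x₁, …)`. -/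
def cons (a : Fin 3) (x : Sig) : Sig := fun n => Nat.casesOn n a x

open Classical in
/-- The metric `d(x,y) = (1/2)^(min{n : x n ≠ y n})`, with `d(x,x) = 0`. -/
def dist3 (x y : Sig) : ℝ :=
  if h : x ≠ y then (1 / 2 : ℝ) ^ Nat.find (Function.ne_iff.mp h) else 0

/-- The potential `A_α`. -/
def pot (α : ℝ) (x : Sig) : ℝ :=
  if x 0 = 0 then -dist3 x zeroSeq
  else if x 0 = 1 then -(3 * dist3 x oneSeq)
  else -α

/-- The transfer operator `L_β` (for parameter `α`). -/
def transfer (α β : ℝ) (f : Sig → ℝ) : Sig → ℝ :=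
  fun x => ∑ a : Fin 3, Real.exp (β * pot α (cons a x)) * f (cons a x)

/-- The ring `[a^n *_a] = {x : x_i = a for i < n, x_n ≠ a}`. -/
def ringSet (a : Fin 3) (n : ℕ) : Set Sig := {x | (∀ i < n, x i = a) ∧ x n ≠ a}

/-- The cylinder `[a] = {x : x₀ = a}`. -/
def cyl (a : Fin 3) : Set Sig := {x | x 0 = a}

/-- `H` is locally ring-constant: constant on `[2]` and on each ring `[0^m*₀]`, `[1^m*₁]`. -/
def LocallyRingConstant (H : Sig → ℝ) : Prop :=
  (∀ x ∈ cyl 2, ∀ y ∈ cyl 2, H x = H y) ∧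
  (∀ m : ℕ, 1 ≤ m → ∀ x ∈ ringSet 0 m, ∀ y ∈ ringSet 0 m, H x = H y) ∧
  (∀ m : ℕ, 1 ≤ m → ∀ x ∈ ringSet 1 m, ∀ y ∈ ringSet 1 m, H x = H y)

/-- An eigen-measure for `(α,β)` with exponent `P`:  a Borel probability measure `ν`
with `P > 0` and `∫ L_β f dν = e^P ∫ f dν` for every continuous `f`. -/
structure IsEigenMeasure (α β P : ℝ) (ν : Measure Sig) : Prop where
  P_pos : 0 < P
  prob : IsProbabilityMeasure ν
  eigenMeas : ∀ f : Sig → ℝ, Continuous f →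
    ∫ x, transfer α β f x ∂ν = Real.exp P * ∫ x, f x ∂ν

/-- Eigen-data `(P, H, ν)` for `(α,β)`. -/
structure IsEigenData (α β P : ℝ) (H : Sig → ℝ) (ν : Measure Sig) : Prop where
  P_pos : 0 < P
  H_cont : Continuous H
  H_pos : ∀ x, 0 < H x
  eigenFun : ∀ x, transfer α β H x = Real.exp P * H x
  prob : IsProbabilityMeasure ν
  eigenMeas : ∀ f : Sig → ℝ, Continuous f →
    ∫ x, transfer α β f x ∂ν = Real.exp P * ∫ x, f x ∂ν

/-- The Gibbs measure `μ(B) = (∫_B H dν)/(∫ H dν)`. -/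
def gibbs (H : Sig → ℝ) (ν : Measure Sig) : Measure Sig :=
  (ν.withDensity (fun x => ENNReal.ofReal (H x)) Set.univ)⁻¹ •
    ν.withDensity (fun x => ENNReal.ofReal (H x))

/-- Weak convergence (as `β → +∞`) of a family of measures to a measure `μ∞`:
convergence of integrals of every bounded continuous function. -/
def WeakLimit (μ : ℝ → Measure Sig) (μlim : Measure Sig) : Prop :=
  ∀ f : Sig → ℝ, Continuous f → (∃ C : ℝ, ∀ x, |f x| ≤ C) →
    Tendsto (fun β => ∫ x, f x ∂(μ β)) atTop (nhds (∫ x, f x ∂μlim))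

/-- `F(Z,β) = Σ_{k=0}^∞ e^{−kZ}·e^{β/2^{k+1}}`. -/
def Ffun (Z β : ℝ) : ℝ := ∑' k : ℕ, Real.exp (-(k : ℝ) * Z) * Real.exp (β / 2 ^ (k + 1))

/-- `Fpartial Z β m = F_{m-1}(Z,β) = Σ_{k=0}^{m-1} e^{−kZ}·e^{β/2^{k+1}}` (so `Fpartial Z β 0 = F_{-1} = 0`). -/
def Fpartial (Z β : ℝ) (m : ℕ) : ℝ :=
  ∑ k ∈ Finset.range m, Real.exp (-(k : ℝ) * Z) * Real.exp (β / 2 ^ (k + 1))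

/-- A countable-supremum formula for the metric, from which measurability is immediate. -/
lemma dist3_eq_iSup (x z : Sig) :
    dist3 x z = ⨆ n : ℕ, if x n = z n then (0 : ℝ) else (1 / 2 : ℝ) ^ n := by
  classical
  unfold dist3
  split_ifs with h
  · have hspec := Nat.find_spec (Function.ne_iff.mp h)
    have hle : ∀ n : ℕ, (if x n = z n then (0 : ℝ) else (1 / 2 : ℝ) ^ n) ≤
        (1 / 2 : ℝ) ^ Nat.find (Function.ne_iff.mp h) := by
      intro n
      split_ifs with hn
      · positivity
      · exact pow_le_pow_of_le_one (by norm_num) (by norm_num) (Nat.find_min' _ hn)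
    apply le_antisymm
    · refine le_trans (le_of_eq ?_)
        (le_ciSup ⟨_, Set.forall_mem_range.mpr hle⟩ (Nat.find (Function.ne_iff.mp h)))
      rw [if_neg hspec]
    · exact ciSup_le hle
  · have hxz : x = z := not_not.mp h
    simp [hxz]

lemma measurableSet_coord_eq (n : ℕ) (a : Fin 3) : MeasurableSet {x : Sig | x n = a} :=
  measurableSet_eq_fun (measurable_pi_apply n) measurable_const

lemma measurable_dist3 (z : Sig) : Measurable fun x : Sig => dist3 x z := by
  simp_rw [dist3_eq_iSup]
  refine Measurable.iSup fun n => ?_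
  exact Measurable.ite (measurableSet_coord_eq n (z n)) measurable_const measurable_const

lemma dist3_nonneg (x z : Sig) : 0 ≤ dist3 x z := by
  unfold dist3
  split_ifs <;> positivity

lemma dist3_le_one (x z : Sig) : dist3 x z ≤ 1 := by
  unfold dist3
  split_ifs
  · exact pow_le_one₀ (by norm_num) (by norm_num)
  · exact zero_le_one

lemma dist3_eq_zero_iff (x z : Sig) : dist3 x z = 0 ↔ x = z := by
  unfold dist3
  split_ifs with h
  · simp [h]
  · simpa using h

lemma measurable_pot (α : ℝ) : Measurable (pot α) :=
  Measurable.ite (measurableSet_coord_eq 0 0) (measurable_dist3 zeroSeq).neg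
    (Measurable.ite (measurableSet_coord_eq 0 1)
      ((measurable_dist3 oneSeq).const_mul 3).neg measurable_const)

lemma pot_nonpos {α : ℝ} (hα : 0 < α) (x : Sig) : pot α x ≤ 0 := by
  have h0 := dist3_nonneg x zeroSeq
  have h1 := dist3_nonneg x oneSeq
  unfold pot
  split_ifs <;> linarith

lemma abs_pot_le {α : ℝ} (hα : 0 < α) (x : Sig) : |pot α x| ≤ 3 + α := by
  have h0 := dist3_nonneg x zeroSeq
  have h1 := dist3_nonneg x oneSeq
  have h2 := dist3_le_one x zeroSeq
  have h3 := dist3_le_one x oneSeq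
  rw [abs_le]
  unfold pot
  split_ifs <;> constructor <;> linarith

lemma pot_eq_zero_iff {α : ℝ} (hα : 0 < α) (x : Sig) :
    pot α x = 0 ↔ x = zeroSeq ∨ x = oneSeq := by
  constructor
  · intro h
    unfold pot at h
    split_ifs at h
    · exact Or.inl ((dist3_eq_zero_iff _ _).mp (by linarith))
    · exact Or.inr ((dist3_eq_zero_iff _ _).mp (by linarith))
    · linarith
  · rintro (rfl | rfl)
    · simp [pot, zeroSeq, (dist3_eq_zero_iff _ _).mpr]
    · simp [pot, oneSeq, (dist3_eq_zero_iff _ _).mpr]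

lemma zeroSeq_ne_oneSeq : zeroSeq ≠ oneSeq := fun h => by
  simpa [zeroSeq, oneSeq] using congrFun h 0

lemma integrable_pot {α : ℝ} (hα : 0 < α) (μ : Measure Sig) [IsFiniteMeasure μ] :
    Integrable (pot α) μ :=
  Integrable.of_bound (measurable_pot α).aestronglyMeasurable (3 + α)
    (Eventually.of_forall fun x => abs_pot_le hα x)

/-- `A_α` is nonpositive, so its integral vanishes exactly when `μ` is carried by its zero set. -/
lemma integral_pot_eq_zero_iff {α : ℝ} (hα : 0 < α) (μ : Measure Sig) [IsFiniteMeasure μ] :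
    ∫ x, pot α x ∂μ = 0 ↔ ∀ᵐ x ∂μ, x = zeroSeq ∨ x = oneSeq := by
  have h := integral_eq_zero_iff_of_nonneg (μ := μ) (f := fun x => -pot α x)
    (fun x => neg_nonneg.mpr (pot_nonpos hα x)) (integrable_pot hα μ).neg
  rw [integral_neg, neg_eq_zero] at h
  rw [h]
  refine eventually_congr (Eventually.of_forall fun x => ?_)
  simp [pot_eq_zero_iff hα]

/-- A measure carried by two distinct points is the sum of its two point masses. -/
lemma eq_smul_dirac_add {μ : Measure Sig} {a b : Sig} (hab : a ≠ b)
    (h : ∀ᵐ x ∂μ, x = a ∨ x = b) :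
    μ = μ {a} • Measure.dirac a + μ {b} • Measure.dirac b := by
  have hdisj : Disjoint ({a} : Set Sig) {b} := by simpa using hab
  have hs : ∀ᵐ x ∂μ, x ∈ ({a} ∪ {b} : Set Sig) := by simpa [or_comm] using h
  rw [← Measure.restrict_singleton, ← Measure.restrict_singleton,
    ← Measure.restrict_union hdisj (measurableSet_singleton b),
    Measure.restrict_eq_self_of_ae_mem hs]

/-- For every shift-invariant Borel probability measure `μ`, `∫ A_α dμ ≤ 0`, with equality
iff `μ` is a convex combination of `δ_{0^∞}` and `δ_{1^∞}`:  the `A_α`-maximizing measures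
are exactly these convex combinations. -/
theorem maximizing_measures (α : ℝ) (hα : 0 < α) (μ : Measure Sig)
    (hμ : IsProbabilityMeasure μ)
    (hinv : ∀ B : Set Sig, MeasurableSet B → μ (shift ⁻¹' B) = μ B) :
    (∫ x, pot α x ∂μ ≤ 0) ∧
    ((∫ x, pot α x ∂μ = 0) ↔
      ∃ t : ℝ, t ∈ Set.Icc (0 : ℝ) 1 ∧
        μ = ENNReal.ofReal t • Measure.dirac zeroSeq +
            ENNReal.ofReal (1 - t) • Measure.dirac oneSeq) := by
  refine ⟨integral_nonpos fun x => pot_nonpos hα x, ?_⟩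
  rw [integral_pot_eq_zero_iff hα]
  constructor
  · intro h
    have hμeq := eq_smul_dirac_add zeroSeq_ne_oneSeq h
    have hsum : μ {zeroSeq} + μ {oneSeq} = 1 := by
      have := congrArg (fun ν : Measure Sig => ν Set.univ) hμeq
      simpa using this.symm
    have h1 : μ {oneSeq} = 1 - μ {zeroSeq} :=
      ENNReal.eq_sub_of_add_eq (measure_ne_top μ _) (by rw [add_comm]; exact hsum)
    refine ⟨(μ {zeroSeq}).toReal, ⟨ENNReal.toReal_nonneg, ?_⟩, ?_⟩
    · exact ENNReal.toReal_le_of_le_ofReal zero_le_one (by simpa using prob_le_one)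
    · rw [ENNReal.ofReal_sub _ ENNReal.toReal_nonneg, ENNReal.ofReal_one,
        ENNReal.ofReal_toReal (measure_ne_top μ _), ← h1]
      exact hμeq
  · rintro ⟨t, -, rfl⟩
    rw [ae_add_measure_iff]
    exact ⟨Measure.ae_smul_measure (by simp [ae_dirac_eq]) _,
      Measure.ae_smul_measure (by simp [ae_dirac_eq]) _⟩

end
end

section
/- Fix 0 < α ≤ 1 and suppose that for every β > 0 eigen-data (P(β), H_β, ν_β) for (α,β) is given. Then (1/β)·log P(β) → −(1+α) as β → +∞. Moreover, if β_j → +∞ and the functions (1/β_j)·log H_{β_j} converge uniformly on Σ to a function V : Σ → ℝ, then V(1^∞) = V(0^∞) + α. -/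
/-!
Everything is read off from the eigenvalue equation `L_β H = e^P H` for `H = H_β`.

* `H` is constant on rings and on `[2]` (`Sim.eigen_eq`). If `x`, `y` lie in the same such set,
  then so do `wx`, `wy` for every word `w`, with the same Birkhoff sums of the potential; iterating
  `L_β H = e^P H` compares `H x` with `H y` through arbitrarily close points.

* The eigenvalue equation becomes a linear recursion along the rings of `0` and of `1`, linked
  through the first rings and `[2]`. Solving it along each family (`ring_bounds`) leaves a
  three-state system (`reduction`) with `λ = e^P` and
  `K₀ = (λ - 1) H(0^∞) = v K₁ + T`, `K₁ = (λ - 1) H(1^∞) = u K₀ + T`,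
  `λ e^{αβ} T = u K₀ + v K₁ + T`, where, on the exponential scale in `β`,
  `u ≈ max(e^{-β/2}, e^{-β}/P)` and `v ≈ max(e^{-3β/2}, e^{-3β}/P)`.

* The system forces `u < λ e^{αβ}`, hence `P ≳ e^{-(1+α)β}` (`P_lower`). If `P` were exponentially
  larger than this, all cycle weights `u e^{-αβ}`, `v e^{-αβ}`, `uv` would tend to `0` (for `uv`
  this uses `α ≤ 1`), which is impossible (`cycle_dichotomy`, `P_upper`).

* Finally `H(1^∞)/H(0^∞) = K₁/K₀` lies between `u` and `u + 1`, and `u` is of order `e^{αβ}`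
  (`tendsto_log_ratio`), which determines `V(1^∞) - V(0^∞)`.
-/


open MeasureTheory Filter Topology

noncomputable section

/-! ### Ring-constancy of eigenfunctions -/

lemma dist3_eq {x z : Sig} {k : ℕ} (h : ∀ i < k, x i = z i) (hk : x k ≠ z k) :
    dist3 x z = (1 / 2 : ℝ) ^ k := by
  classical
  have hne : x ≠ z := fun e => hk (by rw [e])
  unfold dist3
  rw [dif_pos hne]
  congr 1
  rw [Nat.find_eq_iff]
  exact ⟨hk, fun n hn => not_not.2 (h n hn)⟩

/-- `Sim n x y`: the sequences agree up to index `n`, and the block containing index `n` cannot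
be prolonged differently: either its symbol is `2`, on which the potential does not depend on
block lengths, or it ends at `n` in both sequences. -/
def Sim (n : ℕ) (x y : Sig) : Prop :=
  (∀ i ≤ n, x i = y i) ∧ (x n = 2 ∨ (x (n + 1) ≠ x n ∧ y (n + 1) ≠ x n))

lemma Sim.symm {n : ℕ} {x y : Sig} (h : Sim n x y) : Sim n y x := by
  refine ⟨fun i hi => (h.1 i hi).symm, ?_⟩
  rw [← h.1 n le_rfl]
  exact h.2.imp id And.symm

lemma Sim.cons {n : ℕ} {x y : Sig} (h : Sim n x y) (a : Fin 3) :
    Sim (n + 1) (cons a x) (cons a y) := by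
  refine ⟨fun i hi => ?_, h.2⟩
  cases i with
  | zero => rfl
  | succ i => exact h.1 i (by omega)

lemma Sim.dist3_cons {n : ℕ} {x y : Sig} (h : Sim n x y) {a : Fin 3} (ha : a ≠ 2) :
    dist3 (_root_.cons a x) (fun _ => a) = dist3 (_root_.cons a y) (fun _ => a) := by
  obtain ⟨hk, h2⟩ := h.cons a
  set X := _root_.cons a x
  set Y := _root_.cons a y
  by_cases hex : ∃ i, i ≤ n + 1 ∧ X i ≠ a
  · classical
    have hs := Nat.find_spec hex
    have hm : ∀ i < Nat.find hex, X i = a := by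
      intro i hi
      by_contra hne
      exact Nat.find_min hex hi ⟨by omega, hne⟩
    rw [dist3_eq (k := Nat.find hex) hm hs.2, dist3_eq (k := Nat.find hex)
      (fun i hi => by rw [← hk i (by omega)]; exact hm i hi) (by rw [← hk _ hs.1]; exact hs.2)]
  · push Not at hex
    have hn := hex (n + 1) le_rfl
    rw [hn] at h2
    rcases h2 with h2 | h2
    · exact absurd h2 ha
    · rw [dist3_eq (k := n + 2) (fun i hi => hex i (by omega)) h2.1, dist3_eq (k := n + 2)
        (fun i hi => by rw [← hk i (by omega)]; exact hex i (by omega)) h2.2]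

lemma Sim.pot_cons (α : ℝ) {n : ℕ} {x y : Sig} (h : Sim n x y) (a : Fin 3) :
    pot α (_root_.cons a x) = pot α (_root_.cons a y) := by
  have e : ∀ z, _root_.cons a z 0 = a := fun _ => rfl
  unfold pot
  rw [e, e]
  by_cases h0 : a = 0
  · subst h0
    rw [if_pos rfl, if_pos rfl]
    exact congrArg _ (h.dist3_cons (a := 0) (by decide))
  · by_cases h1 : a = 1
    · subst h1
      rw [if_neg h0, if_neg h0, if_pos rfl, if_pos rfl]
      exact congrArg (fun t => -(3 * t)) (h.dist3_cons (a := 1) (by decide))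
    · simp [h0, h1]

/-- Uniform continuity of `H` in multiplicative form, from compactness of `Σ`. -/
lemma exists_modulus {H : Sig → ℝ} (hc : Continuous H) (hp : ∀ x, 0 < H x) {ε : ℝ} (hε : 0 < ε) :
    ∃ N : ℕ, ∀ x y : Sig, (∀ i ≤ N, x i = y i) → H x ≤ (1 + ε) * H y := by
  by_contra hcon
  push Not at hcon
  -- The pairs violating the bound and agreeing up to `N` form decreasing nonempty closed sets;
  -- a point of their intersection lies on the diagonal, where the bound holds.
  let t : ℕ → Set (Sig × Sig) := fun N =>
    {p | (∀ i ≤ N, p.1 i = p.2 i) ∧ (1 + ε) * H p.2 ≤ H p.1}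
  have hcl : ∀ N, IsClosed (t N) := by
    intro N
    have hle : IsClosed {p : Sig × Sig | (1 + ε) * H p.2 ≤ H p.1} :=
      isClosed_le (by fun_prop) (by fun_prop)
    refine IsClosed.inter ?_ hle
    have : {p : Sig × Sig | ∀ i ≤ N, p.1 i = p.2 i}
        = ⋂ i, ⋂ (_ : i ≤ N), {p : Sig × Sig | p.1 i = p.2 i} := by
      ext p; simp
    change IsClosed {p : Sig × Sig | ∀ i ≤ N, p.1 i = p.2 i}
    rw [this]
    exact isClosed_iInter fun i => isClosed_iInter fun _ => isClosed_eq (by fun_prop) (by fun_prop)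
  obtain ⟨p, hpI⟩ := IsCompact.nonempty_iInter_of_sequence_nonempty_isCompact_isClosed t
    (fun N p h => ⟨fun i hi => h.1 i (by omega), h.2⟩)
    (fun N => by
      obtain ⟨x, y, h1, h2⟩ := hcon N
      exact ⟨(x, y), h1, h2.le⟩)
    (hcl 0).isCompact hcl
  rw [Set.mem_iInter] at hpI
  have heq : p.1 = p.2 := funext fun i => (hpI i).1 i le_rfl
  have h2 := (hpI 0).2
  rw [heq] at h2
  nlinarith [hp p.2, mul_pos hε (hp p.2)]

/-- A continuous positive eigenfunction takes the same value at similar points: prepending the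
same word to both gives equal Birkhoff sums and arbitrarily close points. -/
lemma Sim.eigen_eq {α β l : ℝ} {H : Sig → ℝ} (hl : 0 < l) (hc : Continuous H)
    (hp : ∀ x, 0 < H x) (he : ∀ x, transfer α β H x = l * H x) {n : ℕ} {x y : Sig}
    (h : Sim n x y) : H x = H y := by
  have key : ∀ {n : ℕ} {x y : Sig}, Sim n x y → H x ≤ H y := by
    intro n x y h
    have hε : ∀ ε > 0, H x ≤ (1 + ε) * H y := by
      intro ε hε
      obtain ⟨N, hN⟩ := exists_modulus hc hp hε
      have ind : ∀ j n : ℕ, N ≤ n + j → ∀ x y, Sim n x y → H x ≤ (1 + ε) * H y := by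
        intro j
        induction j with
        | zero => exact fun n hn x y h => hN x y fun i hi => h.1 i (by omega)
        | succ j ih =>
          intro n hn x y h
          have hle : transfer α β H x ≤ (1 + ε) * transfer α β H y := by
            unfold transfer
            rw [Finset.mul_sum]
            refine Finset.sum_le_sum fun a _ => ?_
            have := ih (n + 1) (by omega) _ _ (h.cons a)
            rw [h.pot_cons α a]
            nlinarith [mul_le_mul_of_nonneg_left this
              (Real.exp_pos (β * pot α (_root_.cons a y))).le]
          rw [he, he] at hle
          have : l * H x ≤ l * ((1 + ε) * H y) := by linarith
          exact le_of_mul_le_mul_left this hl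
      exact ind N n (by omega) x y h
    refine le_of_forall_pos_le_add fun δ hδ => ?_
    have := hε (δ / H y) (div_pos hδ (hp y))
    have e : (1 + δ / H y) * H y = H y + δ := by
      field_simp [(hp y).ne']
    linarith
  exact le_antisymm (key h) (key h.symm)

/-! ### The scalar recursion along rings -/

/-- Bounded positive solutions of `l d_m = d_{m+1} + e^{s/2^{m+1}} K`. Dividing by `l` repeatedly
gives `d_0 = K Σ_k l^{-k-1} e^{s/2^{k+1}}`; the bounds are those of this series with all
exponentials replaced by `1`, respectively with its first `N` terms bounded by `e^{s/2}`. -/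
lemma rec_bounds {l s K C : ℝ} (hl : 1 < l) (hK : 0 < K) (hs : 0 < s) {d : ℕ → ℝ}
    (hd : ∀ m, 0 < d m) (hC : ∀ m, d m ≤ C)
    (h : ∀ m, l * d m = d (m + 1) + Real.exp (s / 2 ^ (m + 1)) * K) :
    K / (l - 1) ≤ d 0 ∧
    ∀ N : ℕ, d 0 ≤ (N * Real.exp (s / 2) + Real.exp (s / 2 ^ (N + 1)) / (l - 1)) * K := by
  have hl1 : 0 < l - 1 := by linarith
  -- A sequence bounded above that grows by the factor `l > 1` cannot be positive.
  have grow : ∀ e : ℕ → ℝ, ∀ B, (∀ m, e m ≤ B) → (∀ m, l * e m ≤ e (m + 1)) → e 0 ≤ 0 := by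
    intro e B hB he
    by_contra hpos
    push Not at hpos
    have hpow : ∀ n, l ^ n * e 0 ≤ e n := by
      intro n
      induction n with
      | zero => simp
      | succ n ih =>
        calc l ^ (n + 1) * e 0 = l * (l ^ n * e 0) := by ring
          _ ≤ l * e n := by gcongr
          _ ≤ _ := he n
    obtain ⟨n, hn⟩ := pow_unbounded_of_one_lt (B / e 0) hl
    rw [div_lt_iff₀ hpos] at hn
    linarith [hpow n, hB n]
  constructor
  · have := grow (fun m => K / (l - 1) - d m) (K / (l - 1)) (fun m => by linarith [hd m]) (by
      intro m
      have h1 : 1 ≤ Real.exp (s / 2 ^ (m + 1)) := Real.one_le_exp (by positivity)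
      have h2 : l * (K / (l - 1)) = K / (l - 1) + K := by field_simp; ring
      have := h m
      simp only [mul_sub]
      nlinarith)
    linarith
  · intro N
    have tail : d N ≤ Real.exp (s / 2 ^ (N + 1)) / (l - 1) * K := by
      set G := Real.exp (s / 2 ^ (N + 1))
      have hG : 0 < G := Real.exp_pos _
      have := grow (fun m => d (N + m) - G / (l - 1) * K) C
        (fun m => by
          have : 0 < G / (l - 1) * K := by positivity
          linarith [hC (N + m)]) (by
        intro m
        have h1 : Real.exp (s / 2 ^ (N + m + 1)) ≤ G := by
          apply Real.exp_le_exp.2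
          apply div_le_div_of_nonneg_left hs.le (by positivity)
          exact pow_le_pow_right₀ (by norm_num) (by omega)
        have h2 : l * (G / (l - 1) * K) = G / (l - 1) * K + G * K := by field_simp; ring
        have h3 := h (N + m)
        simp only [mul_sub]
        have : Real.exp (s / 2 ^ (N + m + 1)) * K ≤ G * K := by gcongr
        rw [← add_assoc]
        linarith)
      simp only [add_zero] at this
      linarith
    have step : ∀ n : ℕ, d 0 ≤ n * Real.exp (s / 2) * K + d n := by
      intro n
      induction n with
      | zero => simp
      | succ n ih =>
        have h1 : Real.exp (s / 2 ^ (n + 1)) ≤ Real.exp (s / 2) := by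
          apply Real.exp_le_exp.2
          apply div_le_div_of_nonneg_left hs.le (by positivity)
          calc (2 : ℝ) = 2 ^ 1 := by norm_num
            _ ≤ _ := pow_le_pow_right₀ (by norm_num) (by omega)
        have h2 : Real.exp (s / 2 ^ (n + 1)) * K ≤ Real.exp (s / 2) * K := by gcongr
        have h3 := h n
        have h4 : d n ≤ l * d n := by nlinarith [hd n]
        push_cast
        linarith
    have := step N
    rw [add_mul]
    linarith

/-- The point `a^m 2^∞`. -/
def ringPt (a : Fin 3) (m : ℕ) : Sig := fun n => if n < m then a else 2

lemma cons_ringPt (a : Fin 3) (m : ℕ) : cons a (ringPt a m) = ringPt a (m + 1) := by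
  funext n
  cases n with
  | zero => simp [cons, ringPt]
  | succ n => simp [cons, ringPt]

lemma dist3_ringPt {a : Fin 3} (ha : a ≠ 2) (m : ℕ) :
    dist3 (ringPt a m) (fun _ => a) = (1 / 2 : ℝ) ^ m :=
  dist3_eq (fun i hi => by simp [ringPt, hi]) (by simpa [ringPt] using ha.symm)

/-- The value of an eigenfunction on the first ring, weighted by the potential there, in terms of
the inflow `K`; here `s` is the weight of the potential times `β`. -/
lemma ring_bounds {l s K : ℝ} (hl : 1 < l) (hK : 0 < K) (hs : 0 < s) {H : Sig → ℝ} {a : Fin 3}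
    (hc : Continuous H) (hp : ∀ x, 0 < H x)
    (h : ∀ m : ℕ, l * H (ringPt a (m + 1)) =
      Real.exp (-(s / 2 ^ (m + 2))) * H (ringPt a (m + 2)) + K) :
    Real.exp (-s) / (l - 1) * K ≤ Real.exp (-(s / 2)) * H (ringPt a 1) ∧
    ∀ N : ℕ, Real.exp (-(s / 2)) * H (ringPt a 1) ≤
      Real.exp (-s) * (N * Real.exp (s / 2) + Real.exp (s / 2 ^ (N + 1)) / (l - 1)) * K := by
  obtain ⟨C, hC⟩ : ∃ C, ∀ x, H x ≤ C := by
    obtain ⟨C, hC⟩ := (isCompact_range hc).bddAbove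
    exact ⟨C, fun x => hC ⟨x, rfl⟩⟩
  obtain ⟨h1, h2⟩ := rec_bounds (C := Real.exp s * C)
    (d := fun m => Real.exp (s / 2 ^ (m + 1)) * H (ringPt a (m + 1))) hl hK hs
    (fun m => mul_pos (Real.exp_pos _) (hp _))
    (fun m => by
      have : s / 2 ^ (m + 1) ≤ s := div_le_self hs.le (one_le_pow₀ (by norm_num))
      have := Real.exp_le_exp.2 this
      have := hC (ringPt a (m + 1))
      have := (hp (ringPt a (m + 1))).le
      gcongr)
    (fun m => by
      have e : Real.exp (s / 2 ^ (m + 1)) * Real.exp (-(s / 2 ^ (m + 2)))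
          = Real.exp (s / 2 ^ (m + 2)) := by
        rw [← Real.exp_add]
        congr 1
        field_simp
        ring
      have := h m
      calc _ = Real.exp (s / 2 ^ (m + 1)) * (l * H (ringPt a (m + 1))) := by ring
        _ = (Real.exp (s / 2 ^ (m + 1)) * Real.exp (-(s / 2 ^ (m + 2)))) * H (ringPt a (m + 2))
            + Real.exp (s / 2 ^ (m + 1)) * K := by rw [this]; ring
        _ = _ := by rw [e])
  have e : Real.exp (-(s / 2)) * H (ringPt a 1)
      = Real.exp (-s) * (Real.exp (s / 2 ^ (0 + 1)) * H (ringPt a (0 + 1))) := by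
    rw [← mul_assoc, ← Real.exp_add]
    congr 2
    ring
  rw [e]
  constructor
  · calc _ = Real.exp (-s) * (K / (l - 1)) := by ring
      _ ≤ _ := mul_le_mul_of_nonneg_left h1 (Real.exp_pos _).le
  · intro N
    rw [mul_assoc]
    exact mul_le_mul_of_nonneg_left (h2 N) (Real.exp_pos _).le

/-! ### Reduction to a three-state linear system -/

/-- The eigenvalue equation `L_β H = e^P H` reduced to finitely many unknowns. Here `K₀`, `K₁` are
the inflows into `0^∞`, `1^∞`, the products `u K₀`, `v K₁` and `T` are the weighted values of `H`
on the first `0`-ring, the first `1`-ring and the cylinder `[2]`. -/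
lemma reduction {α β P : ℝ} {H : Sig → ℝ} {ν : Measure Sig} (hβ : 0 < β)
    (hE : IsEigenData α β P H ν) :
    ∃ K₀ K₁ u v T : ℝ, 0 < K₀ ∧ 0 < K₁ ∧ 0 < u ∧ 0 < v ∧ 0 < T ∧
      (Real.exp P - 1) * H zeroSeq = K₀ ∧ (Real.exp P - 1) * H oneSeq = K₁ ∧
      K₀ = v * K₁ + T ∧ K₁ = u * K₀ + T ∧
      Real.exp P * Real.exp (α * β) * T = u * K₀ + v * K₁ + T ∧
      Real.exp (-β) / (Real.exp P - 1) ≤ u ∧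
      (∀ N : ℕ, u ≤ Real.exp (-β) *
        (N * Real.exp (β / 2) + Real.exp (β / 2 ^ (N + 1)) / (Real.exp P - 1))) ∧
      (∀ N : ℕ, v ≤ Real.exp (-(3 * β)) *
        (N * Real.exp (3 * β / 2) + Real.exp (3 * β / 2 ^ (N + 1)) / (Real.exp P - 1))) := by
  have hl : 1 < Real.exp P := Real.one_lt_exp_iff.2 hE.P_pos
  have hp := hE.H_pos
  have hc := hE.H_cont
  have sim : ∀ {n : ℕ} {x y : Sig}, Sim n x y → H x = H y :=
    fun h => h.eigen_eq (Real.exp_pos P) hc hp hE.eigenFun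
  have h2 : ∀ x, H (cons 2 x) = H (ringPt 2 1) := fun x =>
    sim (n := 0) ⟨fun i hi => by obtain rfl : i = 0 := by omega
                                 rfl, Or.inl rfl⟩
  have hring : ∀ (a : Fin 3), a ≠ 2 → ∀ x : Sig, x 0 ≠ a → H (cons a x) = H (ringPt a 1) :=
    fun a ha x hx => sim (n := 0) ⟨fun i hi => by obtain rfl : i = 0 := by omega
                                                  rfl, Or.inr ⟨hx, by
      simpa [ringPt, cons] using ha.symm⟩⟩
  have p2 : ∀ x, pot α (cons 2 x) = -α := fun x => by simp [pot, cons]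
  have p0 : ∀ x : Sig, x 0 ≠ 0 → pot α (cons 0 x) = -(1 / 2) := fun x hx => by
    have := dist3_eq (x := cons 0 x) (z := zeroSeq) (k := 1)
      (fun i hi => by obtain rfl : i = 0 := by omega
                      rfl) hx
    rw [pot, if_pos (show cons 0 x 0 = 0 from rfl), this]; norm_num
  have p1 : ∀ x : Sig, x 0 ≠ 1 → pot α (cons 1 x) = -(3 / 2) := fun x hx => by
    have := dist3_eq (x := cons 1 x) (z := oneSeq) (k := 1)
      (fun i hi => by obtain rfl : i = 0 := by omega
                      rfl) hx
    rw [pot, if_neg (by simp [cons]), if_pos (show cons 1 x 0 = 1 from rfl), this]; norm_num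
  have r0 : ∀ m, pot α (ringPt 0 (m + 1)) = -(1 / 2 ^ (m + 1)) := fun m => by
    have : dist3 (ringPt 0 (m + 1)) zeroSeq = _ := dist3_ringPt (a := 0) (by decide) (m + 1)
    rw [pot, if_pos (by simp [ringPt]), this]; simp
  have r1 : ∀ m, pot α (ringPt 1 (m + 1)) = -(3 / 2 ^ (m + 1)) := fun m => by
    have : dist3 (ringPt 1 (m + 1)) oneSeq = _ := dist3_ringPt (a := 1) (by decide) (m + 1)
    rw [pot, if_neg (by simp [ringPt]), if_pos (by simp [ringPt]), this]
    simp [div_eq_mul_inv]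
  have z0 : cons 0 zeroSeq = zeroSeq := by
    funext n; cases n <;> rfl
  have z1 : cons 1 oneSeq = oneSeq := by
    funext n; cases n <;> rfl
  have pz0 : pot α zeroSeq = 0 := by simp [pot, dist3, zeroSeq]
  have pz1 : pot α oneSeq = 0 := by simp [pot, dist3, oneSeq]
  have eig : ∀ x, Real.exp P * H x = Real.exp (β * pot α (cons 0 x)) * H (cons 0 x)
      + Real.exp (β * pot α (cons 1 x)) * H (cons 1 x)
      + Real.exp (-(α * β)) * H (ringPt 2 1) := by
    intro x
    rw [← hE.eigenFun, transfer, Fin.sum_univ_three, h2, p2]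
    ring_nf
  set S₀ := Real.exp (-(β / 2)) * H (ringPt 0 1) with hS₀
  set S₁ := Real.exp (-(3 * β / 2)) * H (ringPt 1 1) with hS₁
  set T := Real.exp (-(α * β)) * H (ringPt 2 1) with hT
  have S₀pos : 0 < S₀ := mul_pos (Real.exp_pos _) (hp _)
  have S₁pos : 0 < S₁ := mul_pos (Real.exp_pos _) (hp _)
  have Tpos : 0 < T := mul_pos (Real.exp_pos _) (hp _)
  have t0 : ∀ x : Sig, x 0 ≠ 0 → Real.exp (β * pot α (cons 0 x)) * H (cons 0 x) = S₀ := by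
    intro x hx
    rw [p0 x hx, hring 0 (by decide) x hx, hS₀]
    ring_nf
  have t1 : ∀ x : Sig, x 0 ≠ 1 → Real.exp (β * pot α (cons 1 x)) * H (cons 1 x) = S₁ := by
    intro x hx
    rw [p1 x hx, hring 1 (by decide) x hx, hS₁]
    ring_nf
  have ez : (Real.exp P - 1) * H zeroSeq = S₁ + T := by
    have := eig zeroSeq
    rw [z0, pz0, t1 zeroSeq (by simp [zeroSeq])] at this
    simp only [mul_zero, Real.exp_zero] at this
    linarith
  have eo : (Real.exp P - 1) * H oneSeq = S₀ + T := by
    have := eig oneSeq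
    rw [z1, pz1, t0 oneSeq (by simp [oneSeq])] at this
    simp only [mul_zero, Real.exp_zero] at this
    linarith
  have e2 : Real.exp P * H (ringPt 2 1) = S₀ + S₁ + T := by
    have := eig (ringPt 2 1)
    rwa [t0 _ (by simp [ringPt]), t1 _ (by simp [ringPt])] at this
  have b0 := ring_bounds (a := 0) (s := β) (K := S₁ + T) hl (by positivity) hβ hc hp (by
    intro m
    have := eig (ringPt 0 (m + 1))
    rw [t1 _ (by simp [ringPt]), cons_ringPt, r0] at this
    rw [this, show β * -(1 / 2 ^ (m + 1 + 1)) = -(β / 2 ^ (m + 2)) by ring]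
    ring)
  have b1 := ring_bounds (a := 1) (s := 3 * β) (K := S₀ + T) hl (by positivity) (by positivity)
    hc hp (by
    intro m
    have := eig (ringPt 1 (m + 1))
    rw [t0 _ (by simp [ringPt]), cons_ringPt, r1] at this
    rw [this, show β * -(3 / 2 ^ (m + 1 + 1)) = -(3 * β / 2 ^ (m + 2)) by ring]
    ring)
  rw [← hS₀] at b0
  rw [← hS₁] at b1
  have K₀pos : 0 < S₁ + T := by positivity
  have K₁pos : 0 < S₀ + T := by positivity
  refine ⟨S₁ + T, S₀ + T, S₀ / (S₁ + T), S₁ / (S₀ + T), T, K₀pos, K₁pos, by positivity,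
    by positivity, Tpos, ez, eo, ?_, ?_, ?_, ?_, fun N => ?_, fun N => ?_⟩
  · rw [div_mul_cancel₀ _ K₁pos.ne']
  · rw [div_mul_cancel₀ _ K₀pos.ne']
  · rw [div_mul_cancel₀ _ K₁pos.ne', div_mul_cancel₀ _ K₀pos.ne', ← e2, hT]
    have : Real.exp (α * β) * Real.exp (-(α * β)) = 1 := by rw [← Real.exp_add]; simp
    linear_combination (Real.exp P * H (ringPt 2 1)) * this
  · rw [le_div_iff₀ K₀pos]; exact b0.1
  · rw [div_le_iff₀ K₀pos]; exact b0.2 N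
  · rw [div_le_iff₀ K₁pos]; exact b1.2 N

/-! ### Exponential asymptotics -/

lemma exp_sub_one_le {P : ℝ} (h0 : 0 < P) (h1 : P ≤ 1) : Real.exp P - 1 ≤ 2 * P := by
  have := Real.abs_exp_sub_one_le (x := P) (by rw [abs_of_pos h0]; exact h1)
  rw [abs_of_pos h0] at this
  exact (le_abs_self _).trans this

/-- `u < e^P e^{αβ}`, i.e. the cycle through `0`-blocks and the symbol `2` has weight below `1`;
combined with the lower bound on `u` this bounds `P` below. -/
lemma P_lower {α β P : ℝ} {H : Sig → ℝ} {ν : Measure Sig} (hα : 0 < α) (hβ : 0 < β)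
    (hE : IsEigenData α β P H ν) : Real.exp (-((1 + α) * β)) ≤ 6 * P := by
  have hP := hE.P_pos
  obtain ⟨K₀, K₁, u, v, T, hK₀, hK₁, hu, hv, hT, -, -, e0, e1, e2, hul, -, -⟩ := reduction hβ hE
  rcases le_or_gt P 1 with h1 | h1
  · have hl := exp_sub_one_le hP h1
    have hl0 : 0 < Real.exp P - 1 := by linarith [Real.one_lt_exp_iff.2 hP]
    have hlt : u ≤ Real.exp P * Real.exp (α * β) := by
      have : u * T ≤ Real.exp P * Real.exp (α * β) * T := by
        rw [e2]
        have : T ≤ K₀ := by nlinarith [mul_pos hv hK₁]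
        nlinarith [mul_pos hv hK₁]
      exact le_of_mul_le_mul_right this hT
    have h3 := (div_le_iff₀ hl0).1 (hul.trans hlt)
    have h4 : Real.exp P * (Real.exp P - 1) ≤ 6 * P := by nlinarith
    have h5 : Real.exp (-((1 + α) * β)) = Real.exp (-β) * Real.exp (-(α * β)) := by
      rw [← Real.exp_add]; ring_nf
    have h6 : Real.exp (α * β) * Real.exp (-(α * β)) = 1 := by rw [← Real.exp_add]; simp
    rw [h5]
    calc _ ≤ (Real.exp P * Real.exp (α * β) * (Real.exp P - 1)) * Real.exp (-(α * β)) := by gcongr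
      _ = Real.exp P * (Real.exp P - 1) * (Real.exp (α * β) * Real.exp (-(α * β))) := by ring
      _ ≤ _ := by rw [h6]; linarith
  · have : Real.exp (-((1 + α) * β)) ≤ 1 := Real.exp_le_one_iff.2 (by
      have : 0 < (1 + α) * β := by positivity
      linarith)
    linarith

/-- The weights of the three cycles of the reduced system cannot all be small: if those of the two
cycles through `[2]` are at most `1/2`, the third is bounded below. -/
lemma cycle_dichotomy {w K₀ K₁ u v T : ℝ} (hK₀ : 0 < K₀) (hK₁ : 0 < K₁) (hu : 0 < u) (hv : 0 < v)
    (hw1 : w ≤ 1) (e0 : K₀ = v * K₁ + T) (e1 : K₁ = u * K₀ + T)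
    (hT : T ≤ w * (u * K₀ + v * K₁)) (huw : u * w ≤ 1 / 2) (hvw : v * w ≤ 1 / 2) :
    1 / 16 ≤ u * v := by
  have a := mul_pos hu hK₀
  have b := mul_pos hv hK₁
  have h0 : K₀ ≤ 4 * (v * K₁) := by
    nlinarith [mul_le_mul_of_nonneg_right huw hK₀.le, mul_le_mul_of_nonneg_right hw1 b.le]
  have h1 : K₁ ≤ 4 * (u * K₀) := by
    nlinarith [mul_le_mul_of_nonneg_right hvw hK₁.le, mul_le_mul_of_nonneg_right hw1 a.le]
  have h2 : 1 * K₀ ≤ (16 * (u * v)) * K₀ := by nlinarith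
  have := le_of_mul_le_mul_right h2 hK₀
  linarith

lemma tendsto_mul_exp_neg (C : ℝ) {c : ℝ} (hc : 0 < c) :
    Tendsto (fun β : ℝ => C * Real.exp (-(c * β))) atTop (𝓝 0) := by
  have : Tendsto (fun β : ℝ => Real.exp (-(c * β))) atTop (𝓝 0) :=
    Real.tendsto_exp_neg_atTop_nhds_zero.comp (tendsto_id.const_mul_atTop hc)
  simpa using this.const_mul C

/-- If `P` were larger than `e^{-(1+α-ε)β}`, all cycles of the reduced system would have
exponentially small weight. The hypothesis `α ≤ 1` makes the cycle `uv` harmless. -/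
lemma P_upper {α : ℝ} (hα0 : 0 < α) (hα1 : α ≤ 1) {P : ℝ → ℝ} {H : ℝ → Sig → ℝ}
    {ν : ℝ → Measure Sig} (hE : ∀ β > (0 : ℝ), IsEigenData α β (P β) (H β) (ν β))
    {ε : ℝ} (hε0 : 0 < ε) (hε1 : ε ≤ 1) :
    ∀ᶠ β in atTop, P β ≤ Real.exp (-((1 + α - ε) * β)) := by
  obtain ⟨N, hN⟩ : ∃ N : ℕ, (1 / 2 : ℝ) ^ N < ε / 6 :=
    exists_pow_lt_of_lt_one (by positivity) (by norm_num)
  set δ : ℝ := (1 / 2) ^ (N + 1) with hδ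
  have hδ0 : 0 < δ := by positivity
  have hδε : 6 * δ ≤ ε := by rw [hδ, pow_succ]; nlinarith
  set C : ℝ := N + 1 with hC
  have hC0 : 0 < C := by positivity
  have l1 := (tendsto_mul_exp_neg (2 * C) (half_pos hε0)).eventually_le_const
    (u := 1 / 2) (by norm_num)
  have l2 := (tendsto_mul_exp_neg (2 * C) (show 0 < 2 * α by positivity)).eventually_le_const
    (u := 1 / 2) (by norm_num)
  have l3 := (tendsto_mul_exp_neg (C ^ 2) (half_pos hε0)).eventually_lt_const
    (u := 1 / 16) (by norm_num)
  have l4 := (tendsto_mul_exp_neg 2 hα0).eventually_le_const (u := 1) (by norm_num)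
  filter_upwards [l1, l2, l3, l4, eventually_gt_atTop 0] with β l1 l2 l3 l4 hβ
  by_contra hcon
  push Not at hcon
  obtain ⟨K₀, K₁, u, v, T, hK₀, hK₁, hu, hv, hT, -, -, e0, e1, e2, -, huN, hvN⟩ :=
    reduction hβ (hE β hβ)
  have hP := (hE β hβ).P_pos
  have hl1 : P β ≤ Real.exp (P β) - 1 := by linarith [Real.add_one_le_exp (P β)]
  have hinv : 1 / (Real.exp (P β) - 1) ≤ Real.exp ((1 + α - ε) * β) := by
    have := one_div_le_one_div_of_le (Real.exp_pos _) (hcon.le.trans hl1)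
    rwa [Real.exp_neg, one_div, one_div, inv_inv, ← one_div] at this
  -- The common estimate behind the bounds on `u` (with `s = β`) and `v` (with `s = 3β`).
  have est : ∀ s E : ℝ, -s + s / 2 ≤ E → -s + s * δ + (1 + α - ε) * β ≤ E →
      Real.exp (-s) * (N * Real.exp (s / 2) + Real.exp (s / 2 ^ (N + 1)) /
        (Real.exp (P β) - 1)) ≤ C * Real.exp E := by
    intro s E hE1 hE2
    have a1 := Real.exp_le_exp.2 hE1
    have a2 := Real.exp_le_exp.2 hE2
    rw [Real.exp_add] at a1
    rw [Real.exp_add, Real.exp_add] at a2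
    have a3 : Real.exp (s / 2 ^ (N + 1)) = Real.exp (s * δ) := by
      rw [hδ]; congr 1; rw [one_div, inv_pow]; rfl
    calc _ = N * (Real.exp (-s) * Real.exp (s / 2))
          + Real.exp (-s) * Real.exp (s * δ) * (1 / (Real.exp (P β) - 1)) := by rw [a3]; ring
      _ ≤ N * Real.exp E + Real.exp (-s) * Real.exp (s * δ) * Real.exp ((1 + α - ε) * β) := by
          gcongr
      _ ≤ N * Real.exp E + Real.exp E := by gcongr
      _ = _ := by rw [hC]; ring
  have hu' : u ≤ C * Real.exp ((α - ε / 2) * β) :=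
    (huN N).trans (est β _ (by nlinarith) (by nlinarith))
  have hv' : v ≤ C * Real.exp (-(α * β)) :=
    (hvN N).trans (est (3 * β) _ (by nlinarith) (by nlinarith))
  have hx : Real.exp (α * β) * Real.exp (-(α * β)) = 1 := by rw [← Real.exp_add]; simp
  have hx0 : Real.exp ((α - ε / 2) * β) * Real.exp (-(α * β)) = Real.exp (-(ε / 2 * β)) := by
    rw [← Real.exp_add]; ring_nf
  have hx1 : Real.exp (-(α * β)) * Real.exp (-(α * β)) = Real.exp (-(2 * α * β)) := by
    rw [← Real.exp_add]; ring_nf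
  have hy : 0 < Real.exp (-(α * β)) := Real.exp_pos _
  have hTw : T ≤ 2 * Real.exp (-(α * β)) * (u * K₀ + v * K₁) := by
    have hge : 2 ≤ Real.exp (α * β) := by
      nlinarith only [Real.exp_pos (α * β), hx, l4]
    have h1 : Real.exp (α * β) * T ≤ Real.exp (P β) * Real.exp (α * β) * T := by
      have : 1 ≤ Real.exp (P β) := by linarith
      rw [mul_assoc]
      exact le_mul_of_one_le_left (by positivity) this
    have h2 : Real.exp (α * β) * T ≤ 2 * (u * K₀ + v * K₁) := by
      linarith [mul_le_mul_of_nonneg_right hge hT.le]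
    calc T = Real.exp (α * β) * T * Real.exp (-(α * β)) := by linear_combination (-T) * hx
      _ ≤ 2 * (u * K₀ + v * K₁) * Real.exp (-(α * β)) := by gcongr
      _ = _ := by ring
  have huv := cycle_dichotomy hK₀ hK₁ hu hv l4 e0 e1 hTw
    (by
      calc _ ≤ C * Real.exp ((α - ε / 2) * β) * (2 * Real.exp (-(α * β))) := by gcongr
        _ = 2 * C * Real.exp (-(ε / 2 * β)) := by rw [← hx0]; ring
        _ ≤ _ := l1)
    (by
      calc _ ≤ C * Real.exp (-(α * β)) * (2 * Real.exp (-(α * β))) := by gcongr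
        _ = 2 * C * Real.exp (-(2 * α * β)) := by rw [← hx1]; ring
        _ ≤ _ := l2)
  have : u * v ≤ C ^ 2 * Real.exp (-(ε / 2 * β)) := by
    calc _ ≤ C * Real.exp ((α - ε / 2) * β) * (C * Real.exp (-(α * β))) := by gcongr
      _ = _ := by rw [← hx0]; ring
  linarith

lemma tendsto_pressure {α : ℝ} (hα0 : 0 < α) (hα1 : α ≤ 1) {P : ℝ → ℝ} {H : ℝ → Sig → ℝ}
    {ν : ℝ → Measure Sig} (hE : ∀ β > (0 : ℝ), IsEigenData α β (P β) (H β) (ν β)) :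
    Tendsto (fun β => (1 / β) * Real.log (P β)) atTop (𝓝 (-(1 + α))) := by
  rw [tendsto_order]
  constructor
  · intro a ha
    have hlim : Tendsto (fun β : ℝ => -(1 + α) - Real.log 6 * β⁻¹) atTop (𝓝 (-(1 + α))) := by
      simpa using (tendsto_inv_atTop_zero.const_mul (Real.log 6)).const_sub (-(1 + α))
    filter_upwards [hlim.eventually_const_lt ha, eventually_gt_atTop 0] with β h hβ
    have hP := (hE β hβ).P_pos
    have hlow := Real.log_le_log (Real.exp_pos _) (P_lower hα0 hβ (hE β hβ))
    rw [Real.log_exp, Real.log_mul (by norm_num) hP.ne'] at hlow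
    refine h.trans_le ?_
    have e : -(1 + α) - Real.log 6 * β⁻¹ = (1 / β) * (-((1 + α) * β) - Real.log 6) := by
      field_simp
    rw [e]
    have : 0 < 1 / β := by positivity
    gcongr
    linarith
  · intro b hb
    set ε := min 1 ((b + (1 + α)) / 2) with hε
    have hε0 : 0 < ε := lt_min one_pos (by linarith)
    filter_upwards [P_upper hα0 hα1 hE hε0 (min_le_left _ _), eventually_gt_atTop 0] with β h hβ
    have hP := (hE β hβ).P_pos
    have hup := Real.log_le_log hP h
    rw [Real.log_exp] at hup
    have hεb : ε ≤ (b + (1 + α)) / 2 := min_le_right _ _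
    have : (1 / β) * Real.log (P β) ≤ -(1 + α - ε) := by
      rw [one_div, inv_mul_le_iff₀ hβ]
      linarith
    linarith

/-- On the exponential scale `H(1^∞) / H(0^∞) = K₁ / K₀` lies between `u` and `u + 1`, and `u` is
of order `e^{αβ}`. -/
lemma tendsto_log_ratio {α : ℝ} (hα0 : 0 < α) (hα1 : α ≤ 1) {P : ℝ → ℝ} {H : ℝ → Sig → ℝ}
    {ν : ℝ → Measure Sig} (hE : ∀ β > (0 : ℝ), IsEigenData α β (P β) (H β) (ν β)) :
    Tendsto (fun β => (1 / β) * Real.log (H β oneSeq) - (1 / β) * Real.log (H β zeroSeq))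
      atTop (𝓝 α) := by
  have hlo : Tendsto (fun β : ℝ => -1 - Real.log 2 * β⁻¹ - (1 / β) * Real.log (P β))
      atTop (𝓝 α) := by
    have := ((tendsto_inv_atTop_zero.const_mul (Real.log 2)).const_sub (-1)).sub
      (tendsto_pressure hα0 hα1 hE)
    convert this using 2
    ring
  have hhi : Tendsto (fun β : ℝ => α + Real.log 4 * β⁻¹) atTop (𝓝 α) := by
    simpa using (tendsto_inv_atTop_zero.const_mul (Real.log 4)).const_add α
  have key : ∀ᶠ β in atTop,
      -1 - Real.log 2 * β⁻¹ - (1 / β) * Real.log (P β) ≤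
        (1 / β) * Real.log (H β oneSeq) - (1 / β) * Real.log (H β zeroSeq) ∧
      (1 / β) * Real.log (H β oneSeq) - (1 / β) * Real.log (H β zeroSeq) ≤
        α + Real.log 4 * β⁻¹ := by
    filter_upwards [P_upper hα0 hα1 hE one_pos le_rfl, eventually_gt_atTop 0] with β h hβ
    have hP := (hE β hβ).P_pos
    have hP1 : P β ≤ 1 := h.trans (Real.exp_le_one_iff.2 (by nlinarith))
    obtain ⟨K₀, K₁, u, v, T, hK₀, hK₁, hu, hv, hT, eH0, eH1, e0, e1, e2, hul, -, -⟩ :=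
      reduction hβ (hE β hβ)
    have hl := exp_sub_one_le hP hP1
    have hl0 : 0 < Real.exp (P β) - 1 := by linarith [Real.one_lt_exp_iff.2 hP]
    have h0 := (hE β hβ).H_pos zeroSeq
    have h1 := (hE β hβ).H_pos oneSeq
    have hTK : T ≤ K₀ := by nlinarith [mul_pos hv hK₁]
    have hu2 : u ≤ 3 * Real.exp (α * β) := by
      have : u * T ≤ 3 * Real.exp (α * β) * T := by
        have a1 : u * T ≤ Real.exp (P β) * Real.exp (α * β) * T := by
          rw [e2]
          nlinarith [mul_pos hv hK₁]
        have a2 : Real.exp (P β) * Real.exp (α * β) * T ≤ 3 * Real.exp (α * β) * T := by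
          gcongr
          linarith
        exact a1.trans a2
      exact le_of_mul_le_mul_right this hT
    have hlow : u * H β zeroSeq ≤ H β oneSeq := by
      have : (Real.exp (P β) - 1) * (u * H β zeroSeq) ≤ (Real.exp (P β) - 1) * H β oneSeq := by
        calc _ = u * ((Real.exp (P β) - 1) * H β zeroSeq) := by ring
          _ ≤ _ := by rw [eH0, eH1]; linarith
      exact le_of_mul_le_mul_left this hl0
    have hupp : H β oneSeq ≤ (u + 1) * H β zeroSeq := by
      have : (Real.exp (P β) - 1) * H β oneSeq ≤
          (Real.exp (P β) - 1) * ((u + 1) * H β zeroSeq) := by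
        calc _ = K₁ := eH1
          _ ≤ (u + 1) * K₀ := by linarith
          _ = _ := by rw [← eH0]; ring
      exact le_of_mul_le_mul_left this hl0
    have hu1 : Real.exp (-β) / (2 * P β) ≤ u :=
      (div_le_div_of_nonneg_left (Real.exp_pos _).le hl0 hl).trans hul
    have hL : -β - (Real.log 2 + Real.log (P β)) ≤
        Real.log (H β oneSeq) - Real.log (H β zeroSeq) := by
      have a1 := Real.log_le_log (by positivity) hu1
      have a2 := Real.log_le_log (by positivity) hlow
      rw [Real.log_div (Real.exp_pos _).ne' (by positivity), Real.log_exp,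
        Real.log_mul (by norm_num) hP.ne'] at a1
      rw [Real.log_mul hu.ne' h0.ne'] at a2
      linarith
    have hU : Real.log (H β oneSeq) - Real.log (H β zeroSeq) ≤ Real.log 4 + α * β := by
      have a0 : u + 1 ≤ 4 * Real.exp (α * β) := by
        have := Real.one_le_exp (x := α * β) (by positivity)
        linarith
      have a1 := Real.log_le_log (by positivity) a0
      have a2 := Real.log_le_log h1 hupp
      rw [Real.log_mul (by norm_num) (Real.exp_pos _).ne', Real.log_exp] at a1
      rw [Real.log_mul (by positivity) h0.ne'] at a2
      linarith
    have hβi : 0 < β⁻¹ := by positivity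
    have hββ : β⁻¹ * β = 1 := inv_mul_cancel₀ hβ.ne'
    rw [one_div]
    constructor
    · nlinarith [mul_le_mul_of_nonneg_left hL hβi.le]
    · nlinarith [mul_le_mul_of_nonneg_left hU hβi.le]
  exact tendsto_of_tendsto_of_tendsto_of_le_of_le' hlo hhi
    (key.mono fun _ h => h.1) (key.mono fun _ h => h.2)

/-- For `0 < α ≤ 1`: `(1/β)·log P(β) → −(1+α)`, and any uniform limit `V` of
`(1/β_j)·log H_{β_j}` satisfies `V(1^∞) = V(0^∞) + α`. -/
theorem pressure_and_subaction_alpha_le_one (α : ℝ) (hα0 : 0 < α) (hα1 : α ≤ 1)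
    (P : ℝ → ℝ) (H : ℝ → Sig → ℝ) (ν : ℝ → Measure Sig)
    (hE : ∀ β > (0 : ℝ), IsEigenData α β (P β) (H β) (ν β)) :
    Tendsto (fun β => (1 / β) * Real.log (P β)) atTop (nhds (-(1 + α))) ∧
    ∀ (βj : ℕ → ℝ) (V : Sig → ℝ),
      (∀ j, 0 < βj j) → Tendsto βj atTop atTop →
      TendstoUniformly (fun j x => (1 / βj j) * Real.log (H (βj j) x)) V atTop →
      V oneSeq = V zeroSeq + α := by
  refine ⟨tendsto_pressure hα0 hα1 hE, fun βj V _ hβ hV => ?_⟩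
  have h1 := (tendsto_log_ratio hα0 hα1 hE).comp hβ
  have h2 := (hV.tendsto_at oneSeq).sub (hV.tendsto_at zeroSeq)
  have := tendsto_nhds_unique h2 h1
  linarith

end
end
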